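/- arXiv:2603.27072 — 4 statements merged into one kernel-verified Lean document; each statement's English description precedes it below -/
import Mathlib

section
/- Let L ≥ 1 be an integer and X ∈ ℝ^{m×n}, and fix intermediate dimensions d_1, …, d_{L−1} each satisfying d_i ≥ min{m,n} (with d_0 := n and d_L := m). Then ‖X‖_{S^{2/L}}^{2/L} = min { (1/L)·Σ_{i=1}^L ‖W_i‖_F² : W_i ∈ ℝ^{d_i × d_{i−1}} for i = 1, …, L and W_L·W_{L−1}···W_1 = X }, and the minimum is attained. -/
open Matrix

/-- The `i`-th largest singular value of a real matrix `A` (`0`-indexed),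
i.e. the non-increasing rearrangement of the square roots of the
eigenvalues of the positive semidefinite matrix `Aᵀ A`. -/
noncomputable def singularValue {m n : ℕ} (A : Matrix (Fin m) (Fin n) ℝ) (i : Fin (min m n)) : ℝ :=
  let ev : Fin n → ℝ := fun j => Real.sqrt ((Matrix.isHermitian_conjTranspose_mul_self A).eigenvalues j)
  (ev ∘ Tuple.sort ev) ((Fin.castLE (Nat.min_le_right m n) i).rev)

/-- Frobenius norm of a real matrix. -/
noncomputable def frobNorm {m n : ℕ} (A : Matrix (Fin m) (Fin n) ℝ) : ℝ :=
  Real.sqrt (∑ i, ∑ j, (A i j) ^ 2)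

/-- `‖A‖_{S^q}^q = ∑_{i=1}^{min m n} σ_i(A)^q`. -/
noncomputable def schattenPow {m n : ℕ} (A : Matrix (Fin m) (Fin n) ℝ) (q : ℝ) : ℝ :=
  ∑ i : Fin (min m n), (singularValue A i) ^ q

/-- Schatten-`q` quasi-norm `‖A‖_{S^q} = (∑ σ_i(A)^q)^{1/q}`. -/
noncomputable def schattenNorm {m n : ℕ} (A : Matrix (Fin m) (Fin n) ℝ) (q : ℝ) : ℝ :=
  (schattenPow A q) ^ (1 / q)

/-- `chainProd d W L = W_{L-1} * ⋯ * W_1 * W_0` (the end-to-end product of the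
first `L` layers, `W_i : ℝ^{d_{i+1} × d_i}`). -/
noncomputable def chainProd (d : ℕ → ℕ) (W : ∀ i : ℕ, Matrix (Fin (d (i + 1))) (Fin (d i)) ℝ) :
    (L : ℕ) → Matrix (Fin (d L)) (Fin (d 0)) ℝ
  | 0 => 1
  | (L + 1) => W L * chainProd d W L

/-- The ℓ²-regularized deep matrix factorization objective
`𝓛(W) = ‖M♮ − W_L ⋯ W_1‖_F² + (λ/L) ∑ᵢ ‖W_i‖_F²`. -/
noncomputable def deepLoss (L : ℕ) (lam : ℝ) (d : ℕ → ℕ)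
    (Mnat : Matrix (Fin (d L)) (Fin (d 0)) ℝ)
    (W : ∀ i : ℕ, Matrix (Fin (d (i + 1))) (Fin (d i)) ℝ) : ℝ :=
  frobNorm (Mnat - chainProd d W L) ^ 2 + (lam / L) * ∑ i : Fin L, frobNorm (W i.1) ^ 2

/-- The Schatten-regularized objective
`𝓛_{M♮}(M) = ‖M♮ − M‖_F² + λ‖M‖_{S^{2/L}}^{2/L}`. -/
noncomputable def schattenLoss (L : ℕ) (lam : ℝ) {m n : ℕ}
    (Mnat M : Matrix (Fin m) (Fin n) ℝ) : ℝ :=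
  frobNorm (Mnat - M) ^ 2 + lam * schattenPow M (2 / L)

/-! Lower bound: push the right singular vectors of `X = W_L ⋯ W_1` through the layers,
orthogonalizing after each one. A layer `W` stretches the `i`-th orthogonalized vector by at most
`‖W eᵢ‖`, where `e` is its normalized input system, and `∑ᵢ ‖W eᵢ‖² ≤ ‖W‖_F²` by Bessel's
inequality. Since the right singular vectors and their images under `X` are both orthogonal
families, orthogonalization changes nothing at the two ends. Hence `σᵢ` is at most the product of
the `L` stretching factors, and the AM-GM inequality bounds `σᵢ^(2/L)` by the mean of their squares.

Attainment: write `X = U Σ Vᵀ` and spread `Σ` evenly, taking `Wⱼ = Aⱼ Σ^(1/L) Aⱼ₋₁ᵀ` with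
`A₀ = V`, `A_L = U` and arbitrary matrices with orthonormal columns in between. -/

section GramSchmidt

open InnerProductSpace

variable {𝕜 E F ι : Type*} [RCLike 𝕜] [NormedAddCommGroup E] [InnerProductSpace 𝕜 E]
  [NormedAddCommGroup F] [InnerProductSpace 𝕜 F]
  [LinearOrder ι] [LocallyFiniteOrderBot ι] [WellFoundedLT ι]

theorem sub_gramSchmidt_mem_span_Iio (f : ι → E) (i : ι) :
    f i - gramSchmidt 𝕜 f i ∈ Submodule.span 𝕜 (f '' Set.Iio i) := by
  rw [← span_gramSchmidt_Iio 𝕜 f i, gramSchmidt_def, sub_sub_cancel]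
  refine Submodule.sum_mem _ fun j hj => ?_
  rw [Submodule.starProjection_singleton]
  exact Submodule.smul_mem _ _ (Submodule.subset_span ⟨j, by simpa using hj, rfl⟩)

theorem inner_gramSchmidt_eq_zero_of_mem_span_Iio (f : ι → E) {i : ι} {w : E}
    (hw : w ∈ Submodule.span 𝕜 (f '' Set.Iio i)) : inner 𝕜 (gramSchmidt 𝕜 f i) w = 0 := by
  induction hw using Submodule.span_induction with
  | mem w hw =>
    obtain ⟨j, hj, rfl⟩ := hw
    exact gramSchmidt_inv_triangular 𝕜 f hj
  | zero => exact inner_zero_right _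
  | add a b _ _ ha hb => rw [inner_add_right, ha, hb, add_zero]
  | smul c a _ ha => rw [inner_smul_right, ha, mul_zero]

theorem inner_gramSchmidt_map_gramSchmidt (T : E →ₗ[𝕜] F) (f : ι → E) (i : ι) :
    inner 𝕜 (gramSchmidt 𝕜 (T ∘ f) i) (T (gramSchmidt 𝕜 f i)) =
      (‖gramSchmidt 𝕜 (T ∘ f) i‖ : 𝕜) ^ 2 := by
  have hmap : T (f i) - T (gramSchmidt 𝕜 f i) ∈ Submodule.span 𝕜 (T ∘ f '' Set.Iio i) := by
    rw [← map_sub, Set.image_comp, ← Submodule.map_span]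
    exact Submodule.mem_map_of_mem (sub_gramSchmidt_mem_span_Iio f i)
  have hTf := inner_gramSchmidt_eq_zero_of_mem_span_Iio (T ∘ f)
    (sub_gramSchmidt_mem_span_Iio (𝕜 := 𝕜) (T ∘ f) i)
  have hTgs := inner_gramSchmidt_eq_zero_of_mem_span_Iio (T ∘ f) hmap
  rw [inner_sub_right, sub_eq_zero] at hTf hTgs
  rw [← hTgs, ← inner_self_eq_norm_sq_to_K, ← hTf, Function.comp_apply]

theorem norm_gramSchmidt_map_le (T : E →ₗ[𝕜] F) (f : ι → E) (i : ι) :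
    ‖gramSchmidt 𝕜 (T ∘ f) i‖ ≤ ‖T (gramSchmidtNormed 𝕜 f i)‖ * ‖gramSchmidt 𝕜 f i‖ := by
  have hnormed : gramSchmidt 𝕜 f i =
      (‖gramSchmidt 𝕜 f i‖ : 𝕜) • gramSchmidtNormed 𝕜 f i := by
    by_cases h : gramSchmidt 𝕜 f i = 0
    · simp [h]
    · simp [gramSchmidtNormed, smul_smul, h]
  have hcs : ‖gramSchmidt 𝕜 (T ∘ f) i‖ ^ 2 ≤
      ‖gramSchmidt 𝕜 (T ∘ f) i‖ * ‖T (gramSchmidt 𝕜 f i)‖ := by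
    simpa [inner_gramSchmidt_map_gramSchmidt] using
      norm_inner_le_norm (𝕜 := 𝕜) (gramSchmidt 𝕜 (T ∘ f) i) (T (gramSchmidt 𝕜 f i))
  calc ‖gramSchmidt 𝕜 (T ∘ f) i‖
      ≤ ‖T (gramSchmidt 𝕜 f i)‖ := by
        by_contra! hlt
        nlinarith [norm_nonneg (T (gramSchmidt 𝕜 f i))]
    _ = ‖T (gramSchmidtNormed 𝕜 f i)‖ * ‖gramSchmidt 𝕜 f i‖ := by
        conv_lhs => rw [hnormed]
        simp [norm_smul, mul_comm]

theorem norm_gramSchmidt_le_prod {G : ℕ → Type*} [∀ k, NormedAddCommGroup (G k)]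
    [∀ k, InnerProductSpace 𝕜 (G k)] (T : ∀ k, G k →ₗ[𝕜] G (k + 1)) (f : ∀ k, ι → G k)
    (hf : ∀ k, f (k + 1) = T k ∘ f k) (L : ℕ) (i : ι) :
    ‖gramSchmidt 𝕜 (f L) i‖ ≤
      (∏ k ∈ Finset.range L, ‖T k (gramSchmidtNormed 𝕜 (f k) i)‖) * ‖gramSchmidt 𝕜 (f 0) i‖ := by
  induction L with
  | zero => simp
  | succ L ih =>
    rw [hf, Finset.prod_range_succ_comm, mul_assoc]
    exact (norm_gramSchmidt_map_le _ _ _).trans (by gcongr)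

theorem sum_norm_inner_gramSchmidtNormed_sq_le [Fintype ι] (f : ι → E) (w : E) :
    ∑ i, ‖inner 𝕜 (gramSchmidtNormed 𝕜 f i) w‖ ^ 2 ≤ ‖w‖ ^ 2 := by
  classical
  calc ∑ i, ‖inner 𝕜 (gramSchmidtNormed 𝕜 f i) w‖ ^ 2
      = ∑ i : {i | gramSchmidtNormed 𝕜 f i ≠ 0}, ‖inner 𝕜 (gramSchmidtNormed 𝕜 f i) w‖ ^ 2 := by
        symm
        refine Fintype.sum_of_injective _ Subtype.val_injective _ _ (fun i hi => ?_) fun _ => rfl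
        have hzero : gramSchmidtNormed 𝕜 f i = 0 := by simpa using hi
        simp [hzero]
    _ ≤ ‖w‖ ^ 2 := (gramSchmidtNormed_orthonormal' (𝕜 := 𝕜) f).sum_inner_products_le w

end GramSchmidt

section OrthonormalColumns

theorem inner_toLp_col {m : Type*} [Fintype m] {n p : Type*} (A : Matrix m n ℝ)
    (B : Matrix m p ℝ) (i : n) (j : p) :
    inner ℝ (WithLp.toLp 2 (A.col i)) (WithLp.toLp 2 (B.col j)) = (Aᵀ * B) i j := by
  simp [Matrix.mul_apply, PiLp.inner_apply, mul_comm]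

theorem orthonormal_toLp_col_iff {m n : Type*} [Fintype m] [DecidableEq n] {A : Matrix m n ℝ} :
    Orthonormal ℝ (fun i => WithLp.toLp 2 (A.col i)) ↔ Aᵀ * A = 1 := by
  simp only [orthonormal_iff_ite, inner_toLp_col, ← Matrix.ext_iff, Matrix.one_apply]

theorem exists_orthonormal_extension {𝕜 E ι : Type*} [RCLike 𝕜] [NormedAddCommGroup E]
    [InnerProductSpace 𝕜 E] [FiniteDimensional 𝕜 E] [Fintype ι]
    (hcard : Fintype.card ι ≤ Module.finrank 𝕜 E) {v : ι → E} {s : Set ι}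
    (hv : Orthonormal 𝕜 (s.domRestrict v)) :
    ∃ w : ι → E, Orthonormal 𝕜 w ∧ ∀ i ∈ s, w i = v i := by
  obtain ⟨e⟩ : Nonempty (ι ↪ Fin (Module.finrank 𝕜 E)) :=
    Function.Embedding.nonempty_of_card_le (by simpa using hcard)
  have hext (i : ι) : Function.extend e v 0 (e i) = v i := e.injective.extend_apply _ _ _
  have horth : Orthonormal 𝕜 ((e '' s).domRestrict (Function.extend e v 0)) := by
    have hcomp := hv.comp _ (Equiv.Set.image e s e.injective).symm.injective
    convert! hcomp using 1
    funext ⟨_, i, hi, rfl⟩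
    have hsymm : (Equiv.Set.image e s e.injective).symm ⟨e i, i, hi, rfl⟩ = ⟨i, hi⟩ :=
      Equiv.Set.image_symm_apply _ _ _ _ _
    simp [hext, hsymm]
  obtain ⟨b, hb⟩ := horth.exists_orthonormalBasis_extension_of_card_eq (by simp)
  exact ⟨b ∘ e, b.orthonormal.comp e e.injective,
    fun i hi => (hb (e i) ⟨i, hi, rfl⟩).trans (hext i)⟩

theorem exists_eq_mul_diagonal_of_transpose_mul_self {m n : Type*} [Fintype m] [Fintype n]
    [DecidableEq n] (hcard : Fintype.card n ≤ Fintype.card m) {Y : Matrix m n ℝ} {s : n → ℝ}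
    (hY : Yᵀ * Y = diagonal (s ^ 2)) :
    ∃ U : Matrix m n ℝ, Uᵀ * U = 1 ∧ Y = U * diagonal s := by
  let y (i : n) : EuclideanSpace ℝ m := WithLp.toLp 2 (Y.col i)
  have hy (i j : n) : inner ℝ (y i) (y j) = if i = j then s i ^ 2 else 0 := by
    rw [inner_toLp_col, hY, diagonal_apply, Pi.pow_apply]
  have hnormalized : Orthonormal ℝ ({i | s i ≠ 0}.domRestrict fun i => (s i)⁻¹ • y i) := by
    rw [orthonormal_iff_ite]
    rintro ⟨i, hi⟩ ⟨j, hj⟩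
    have hsi : s i ≠ 0 := hi
    simp only [Set.domRestrict_apply, real_inner_smul_left, real_inner_smul_right, hy,
      Subtype.mk.injEq]
    split_ifs with hij
    · subst hij
      field_simp
    · simp
  obtain ⟨u, hu, hus⟩ := exists_orthonormal_extension (by simpa using hcard) hnormalized
  have hyu (i : n) : y i = s i • u i := by
    by_cases hsi : s i = 0
    · have hyi : inner ℝ (y i) (y i) = 0 := by rw [hy, if_pos rfl, hsi, zero_pow two_ne_zero]
      rw [hsi, zero_smul, inner_self_eq_zero.mp hyi]
    · rw [hus i hsi, smul_smul, mul_inv_cancel₀ hsi, one_smul]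
  refine ⟨of fun a i => u i a, orthonormal_toLp_col_iff.mp hu, ?_⟩
  ext a i
  have hentry : y i a = s i * u i a := by rw [hyu i]; rfl
  rw [mul_diagonal, of_apply, mul_comm, ← hentry]
  rfl

theorem exists_transpose_mul_self_eq_one {R m n : Type*} [NonAssocSemiring R] [Fintype m]
    [Fintype n] [DecidableEq n] (hcard : Fintype.card n ≤ Fintype.card m) :
    ∃ A : Matrix m n R, Aᵀ * A = 1 := by
  classical
  obtain ⟨e⟩ : Nonempty (n ↪ m) := Function.Embedding.nonempty_of_card_le hcard
  refine ⟨(1 : Matrix m m R).submatrix id e, ?_⟩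
  rw [transpose_submatrix, transpose_one, ← submatrix_mul _ _ _ _ _ Function.bijective_id, one_mul,
    submatrix_one_embedding]

end OrthonormalColumns

section Frobenius

variable {m n r : ℕ}

theorem frobNorm_sq (A : Matrix (Fin m) (Fin n) ℝ) : frobNorm A ^ 2 = ∑ i, ∑ j, A i j ^ 2 :=
  Real.sq_sqrt (by positivity)

theorem frobNorm_sq_eq_trace (A : Matrix (Fin m) (Fin n) ℝ) :
    frobNorm A ^ 2 = (Aᵀ * A).trace := by
  rw [frobNorm_sq, Finset.sum_comm]
  simp [trace, Matrix.mul_apply, sq]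

theorem frobNorm_sq_mul_diagonal_mul_transpose {U : Matrix (Fin m) (Fin r) ℝ}
    {V : Matrix (Fin n) (Fin r) ℝ} (hU : Uᵀ * U = 1) (hV : Vᵀ * V = 1) (s : Fin r → ℝ) :
    frobNorm (U * diagonal s * Vᵀ) ^ 2 = ∑ i, s i ^ 2 := by
  have hgram : (U * diagonal s * Vᵀ)ᵀ * (U * diagonal s * Vᵀ) =
      V * (diagonal s * (Uᵀ * U) * diagonal s * Vᵀ) := by
    simp only [transpose_mul, transpose_transpose, diagonal_transpose, Matrix.mul_assoc]
  rw [frobNorm_sq_eq_trace, hgram, hU, trace_mul_comm, Matrix.mul_assoc, hV]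
  simp [sq]

theorem sum_norm_toEuclideanLin_sq_le_frobNorm_sq {ι : Type*} [Fintype ι]
    {e : ι → EuclideanSpace ℝ (Fin n)} (he : ∀ w, ∑ i, ‖inner ℝ (e i) w‖ ^ 2 ≤ ‖w‖ ^ 2)
    (A : Matrix (Fin m) (Fin n) ℝ) :
    ∑ i, ‖A.toEuclideanLin (e i)‖ ^ 2 ≤ frobNorm A ^ 2 := by
  have hentry (i : ι) (a : Fin m) :
      A.toEuclideanLin (e i) a = inner ℝ (e i) (WithLp.toLp 2 (A a)) := by
    simp [mulVec, dotProduct, PiLp.inner_apply]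
  calc ∑ i, ‖A.toEuclideanLin (e i)‖ ^ 2
      = ∑ a, ∑ i, ‖inner ℝ (e i) (WithLp.toLp 2 (A a))‖ ^ 2 := by
        rw [Finset.sum_comm]
        simp only [EuclideanSpace.norm_sq_eq, hentry]
    _ ≤ ∑ a, ‖WithLp.toLp 2 (A a)‖ ^ 2 := Finset.sum_le_sum fun a _ => he _
    _ = frobNorm A ^ 2 := by simp [frobNorm_sq, EuclideanSpace.real_norm_sq_eq]

end Frobenius

section SingularValueDecomposition

variable {m n : ℕ}

theorem apply_sort_eq_zero_of_card_ne_zero_le {α : Type*} [LinearOrder α] [Zero α]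
    {f : Fin n → α} (hf : ∀ j, 0 ≤ f j) {p : Fin n}
    (hp : Fintype.card {j // f j ≠ 0} ≤ p.rev) : f (Tuple.sort f p) = 0 := by
  by_contra hne
  have hsupp (q : Fin n) (hq : q ∈ Finset.Ici p) : f (Tuple.sort f q) ≠ 0 :=
    (((hf _).lt_of_ne' hne).trans_le (Tuple.monotone_sort f (Finset.mem_Ici.mp hq))).ne'
  have hcard : (Finset.Ici p).card ≤ Fintype.card {j // f j ≠ 0} := by
    rw [Fintype.card_subtype]
    exact Finset.card_le_card_of_injOn (Tuple.sort f) (fun q hq => by simpa using hsupp q hq)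
      (Equiv.injective _).injOn
  rw [Fin.card_Ici] at hcard
  rw [Fin.val_rev] at hp
  omega

/-- The position of the `i`-th largest singular value of `X` among the (unordered) eigenvalues of
`Xᵀ X`, so that `singularValue X i` is the square root of the eigenvalue at this index. -/
noncomputable def singularIndex (X : Matrix (Fin m) (Fin n) ℝ) : Fin (min m n) ↪ Fin n :=
  (Fin.castLEEmb (Nat.min_le_right m n)).trans <| Fin.revPerm.toEmbedding.trans
    (Tuple.sort fun j => √((isHermitian_conjTranspose_mul_self X).eigenvalues j)).toEmbedding

/-- The orthogonal matrix whose columns are the eigenvectors of `Xᵀ X`, in the unordered indexing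
of `Matrix.IsHermitian.eigenvalues`. -/
noncomputable def gramEigenvectorMatrix (X : Matrix (Fin m) (Fin n) ℝ) :
    Matrix (Fin n) (Fin n) ℝ :=
  (isHermitian_conjTranspose_mul_self X).eigenvectorUnitary

/-- The matrix `V` of the singular value decomposition `X = U Σ Vᵀ`: its columns are the
eigenvectors of `Xᵀ X` belonging to the `min m n` largest eigenvalues. -/
noncomputable def rightSingularMatrix (X : Matrix (Fin m) (Fin n) ℝ) :
    Matrix (Fin n) (Fin (min m n)) ℝ :=
  (gramEigenvectorMatrix X).submatrix id (singularIndex X)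

variable (X : Matrix (Fin m) (Fin n) ℝ)

theorem singularValue_nonneg (i : Fin (min m n)) : 0 ≤ singularValue X i :=
  Real.sqrt_nonneg _

theorem singularValue_sq (i : Fin (min m n)) :
    singularValue X i ^ 2 =
      (isHermitian_conjTranspose_mul_self X).eigenvalues (singularIndex X i) :=
  Real.sq_sqrt ((posSemidef_conjTranspose_mul_self X).eigenvalues_nonneg _)

theorem eigenvalues_eq_zero_of_notMem_range_singularIndex {t : Fin n}
    (ht : t ∉ Set.range (singularIndex X)) :
    (isHermitian_conjTranspose_mul_self X).eigenvalues t = 0 := by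
  have hX := isHermitian_conjTranspose_mul_self X
  have hnonneg := (posSemidef_conjTranspose_mul_self X).eigenvalues_nonneg
  obtain ⟨p, rfl⟩ := (Tuple.sort fun j => √(hX.eigenvalues j)).surjective t
  have hp : min m n ≤ p.rev := by
    by_contra! hlt
    exact ht ⟨⟨p.rev, hlt⟩, congrArg (Tuple.sort fun j => √(hX.eigenvalues j)) (Fin.rev_rev p)⟩
  have hrank : Fintype.card {j // √(hX.eigenvalues j) ≠ 0} ≤ min m n := by
    simp only [ne_eq, Real.sqrt_eq_zero (hnonneg _)]
    rw [← hX.rank_eq_card_non_zero_eigs, rank_conjTranspose_mul_self]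
    exact le_min X.rank_le_height X.rank_le_width
  exact (Real.sqrt_eq_zero (hnonneg _)).mp <|
    apply_sort_eq_zero_of_card_ne_zero_le (fun _ => Real.sqrt_nonneg _) (hrank.trans hp)

theorem gramEigenvectorMatrix_transpose_mul_self :
    (gramEigenvectorMatrix X)ᵀ * gramEigenvectorMatrix X = 1 :=
  Unitary.coe_star_mul_self (isHermitian_conjTranspose_mul_self X).eigenvectorUnitary

theorem mul_gramEigenvectorMatrix_transpose_mul_self :
    (X * gramEigenvectorMatrix X)ᵀ * (X * gramEigenvectorMatrix X) =
      diagonal (isHermitian_conjTranspose_mul_self X).eigenvalues := by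
  have hspec := (isHermitian_conjTranspose_mul_self X).conjStarAlgAut_star_eigenvectorUnitary
  simpa [gramEigenvectorMatrix, Unitary.conjStarAlgAut_apply, transpose_mul, Matrix.mul_assoc,
    star_eq_conjTranspose, Function.comp_def] using hspec

theorem rightSingularMatrix_transpose_mul_self :
    (rightSingularMatrix X)ᵀ * rightSingularMatrix X = 1 := by
  rw [rightSingularMatrix, transpose_submatrix, ← submatrix_mul _ _ _ _ _ Function.bijective_id,
    gramEigenvectorMatrix_transpose_mul_self, submatrix_one_embedding]

theorem mul_rightSingularMatrix_transpose_mul_self :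
    (X * rightSingularMatrix X)ᵀ * (X * rightSingularMatrix X) =
      diagonal (singularValue X ^ 2) := by
  have hcols : X * rightSingularMatrix X =
      (X * gramEigenvectorMatrix X).submatrix id (singularIndex X) := rfl
  rw [hcols, transpose_submatrix, ← submatrix_mul _ _ _ _ _ Function.bijective_id,
    mul_gramEigenvectorMatrix_transpose_mul_self, submatrix_diagonal_embedding]
  exact congrArg diagonal (funext fun i => (singularValue_sq X i).symm)

theorem mul_gramEigenvectorMatrix_apply_eq_zero {t : Fin n}
    (ht : t ∉ Set.range (singularIndex X)) (a : Fin m) : (X * gramEigenvectorMatrix X) a t = 0 := by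
  have hnorm : ((X * gramEigenvectorMatrix X)ᵀ * (X * gramEigenvectorMatrix X)) t t = 0 := by
    rw [mul_gramEigenvectorMatrix_transpose_mul_self, diagonal_apply_eq,
      eigenvalues_eq_zero_of_notMem_range_singularIndex X ht]
  exact congrFun (dotProduct_self_eq_zero.mp hnorm) a

theorem mul_rightSingularMatrix_mul_transpose :
    X * rightSingularMatrix X * (rightSingularMatrix X)ᵀ = X := by
  calc X * rightSingularMatrix X * (rightSingularMatrix X)ᵀ
      = X * gramEigenvectorMatrix X * (gramEigenvectorMatrix X)ᵀ := by
        ext a b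
        rw [Matrix.mul_apply, Matrix.mul_apply]
        refine Fintype.sum_of_injective _ (singularIndex X).injective _ _ (fun t ht => ?_)
          fun _ => rfl
        rw [mul_gramEigenvectorMatrix_apply_eq_zero X ht, zero_mul]
    _ = X := by
        rw [Matrix.mul_assoc, mul_eq_one_comm.mp (gramEigenvectorMatrix_transpose_mul_self X),
          Matrix.mul_one]

theorem exists_singularValueDecomposition :
    ∃ (U : Matrix (Fin m) (Fin (min m n)) ℝ) (V : Matrix (Fin n) (Fin (min m n)) ℝ),
      Uᵀ * U = 1 ∧ Vᵀ * V = 1 ∧ X = U * diagonal (singularValue X) * Vᵀ := by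
  obtain ⟨U, hU, hXV⟩ := exists_eq_mul_diagonal_of_transpose_mul_self (by simp)
    (mul_rightSingularMatrix_transpose_mul_self X)
  refine ⟨U, rightSingularMatrix X, hU, rightSingularMatrix_transpose_mul_self X, ?_⟩
  rw [← hXV, mul_rightSingularMatrix_mul_transpose]

end SingularValueDecomposition

section LowerBound

open InnerProductSpace

theorem prod_rpow_two_div_card_le {ι : Type*} {s : Finset ι} (hs : s.Nonempty) {a : ι → ℝ}
    (ha : ∀ i ∈ s, 0 ≤ a i) :
    (∏ i ∈ s, a i) ^ (2 / s.card : ℝ) ≤ (1 / s.card : ℝ) * ∑ i ∈ s, a i ^ 2 := by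
  have hcard : (s.card : ℝ) ≠ 0 := by exact_mod_cast hs.card_pos.ne'
  calc (∏ i ∈ s, a i) ^ (2 / s.card : ℝ)
      = ∏ i ∈ s, (a i ^ 2) ^ (1 / s.card : ℝ) := by
        rw [← Real.finsetProd_rpow _ _ ha]
        refine Finset.prod_congr rfl fun i hi => ?_
        rw [← Real.rpow_natCast, ← Real.rpow_mul (ha i hi), Nat.cast_ofNat, mul_one_div]
    _ ≤ ∑ i ∈ s, (1 / s.card : ℝ) * a i ^ 2 :=
        Real.geom_mean_le_arith_mean_weighted _ _ _ (fun _ _ => by positivity)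
          (by simp [hcard]) fun _ _ => sq_nonneg _
    _ = (1 / s.card : ℝ) * ∑ i ∈ s, a i ^ 2 := (Finset.mul_sum _ _ _).symm

variable {L : ℕ} {d : ℕ → ℕ}

theorem sum_norm_chainProd_rpow_le (hL : 1 ≤ L)
    (W : ∀ i : ℕ, Matrix (Fin (d (i + 1))) (Fin (d i)) ℝ)
    {ι : Type*} [LinearOrder ι] [LocallyFiniteOrderBot ι] [WellFoundedLT ι] [Fintype ι]
    {v : ι → EuclideanSpace ℝ (Fin (d 0))} (hv : Orthonormal ℝ v)
    (horth : Pairwise fun i j => inner ℝ ((chainProd d W L).toEuclideanLin (v i))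
      ((chainProd d W L).toEuclideanLin (v j)) = 0) :
    ∑ i, ‖(chainProd d W L).toEuclideanLin (v i)‖ ^ (2 / L : ℝ) ≤
      (1 / L : ℝ) * ∑ k : Fin L, frobNorm (W k.1) ^ 2 := by
  let f (k : ℕ) (i : ι) : EuclideanSpace ℝ (Fin (d k)) := (chainProd d W k).toEuclideanLin (v i)
  let stretch (k : ℕ) (i : ι) : ℝ := ‖(W k).toEuclideanLin (gramSchmidtNormed ℝ (f k) i)‖
  have hf (k : ℕ) : f (k + 1) = (W k).toEuclideanLin ∘ f k := by
    funext i
    simp [f, chainProd]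
  have hf0 : f 0 = v := by
    funext i
    simp [f, chainProd]
  have hstretch (i : ι) : ‖f L i‖ ≤ ∏ k ∈ Finset.range L, stretch k i := by
    have hgs := norm_gramSchmidt_le_prod (fun k => (W k).toEuclideanLin) f hf L i
    rwa [gramSchmidt_of_orthogonal ℝ horth, hf0, gramSchmidt_of_orthogonal ℝ hv.2, hv.1,
      mul_one] at hgs
  calc ∑ i, ‖f L i‖ ^ (2 / L : ℝ)
      ≤ ∑ i, (∏ k ∈ Finset.range L, stretch k i) ^ (2 / L : ℝ) := by
        gcongr with i
        exact hstretch i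
    _ ≤ ∑ i, (1 / L : ℝ) * ∑ k ∈ Finset.range L, stretch k i ^ 2 := by
        refine Finset.sum_le_sum fun i _ => ?_
        simpa only [Finset.card_range] using prod_rpow_two_div_card_le
          (Finset.nonempty_range_iff.mpr (Nat.one_le_iff_ne_zero.mp hL))
          fun k _ => norm_nonneg ((W k).toEuclideanLin (gramSchmidtNormed ℝ (f k) i))
    _ = (1 / L : ℝ) * ∑ k : Fin L, ∑ i, stretch k i ^ 2 := by
        rw [← Finset.mul_sum, Finset.sum_comm, Finset.sum_range]
    _ ≤ (1 / L : ℝ) * ∑ k : Fin L, frobNorm (W k.1) ^ 2 := by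
        gcongr with k
        exact sum_norm_toEuclideanLin_sq_le_frobNorm_sq
          (sum_norm_inner_gramSchmidtNormed_sq_le (f k)) (W k)

theorem schattenPow_chainProd_le (hL : 1 ≤ L)
    (W : ∀ i : ℕ, Matrix (Fin (d (i + 1))) (Fin (d i)) ℝ) :
    schattenPow (chainProd d W L) (2 / L) ≤
      (1 / L : ℝ) * ∑ k : Fin L, frobNorm (W k.1) ^ 2 := by
  set X := chainProd d W L
  let v (i : Fin (min (d L) (d 0))) : EuclideanSpace ℝ (Fin (d 0)) :=
    WithLp.toLp 2 ((rightSingularMatrix X).col i)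
  have hv : Orthonormal ℝ v :=
    orthonormal_toLp_col_iff.mpr (rightSingularMatrix_transpose_mul_self X)
  have hinner (i j : Fin (min (d L) (d 0))) :
      inner ℝ (X.toEuclideanLin (v i)) (X.toEuclideanLin (v j)) =
        diagonal (singularValue X ^ 2) i j := by
    rw [← mul_rightSingularMatrix_transpose_mul_self, ← inner_toLp_col]
    rfl
  have hnorm (i : Fin (min (d L) (d 0))) : ‖X.toEuclideanLin (v i)‖ = singularValue X i := by
    rw [← sq_eq_sq₀ (norm_nonneg _) (singularValue_nonneg X i), ← real_inner_self_eq_norm_sq,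
      hinner, diagonal_apply_eq, Pi.pow_apply]
  calc schattenPow X (2 / L) = ∑ i, ‖X.toEuclideanLin (v i)‖ ^ (2 / L : ℝ) := by
        simp only [schattenPow, hnorm]
    _ ≤ (1 / L : ℝ) * ∑ k : Fin L, frobNorm (W k.1) ^ 2 :=
        sum_norm_chainProd_rpow_le hL W hv fun i j hij =>
          (hinner i j).trans (diagonal_apply_ne _ hij)

end LowerBound

section Attainment

variable {L r : ℕ} {d : ℕ → ℕ}

theorem chainProd_mul_mul_transpose {A : ∀ j, Matrix (Fin (d j)) (Fin r) ℝ} {k : ℕ}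
    (hA : ∀ j, 1 ≤ j → j ≤ k → (A j)ᵀ * A j = 1) (D : Matrix (Fin r) (Fin r) ℝ) :
    chainProd d (fun j => A (j + 1) * D * (A j)ᵀ) (k + 1) = A (k + 1) * D ^ (k + 1) * (A 0)ᵀ := by
  induction k with
  | zero => simp [chainProd]
  | succ k ih =>
    rw [chainProd, ih fun j hj hjk => hA j hj (hjk.trans k.le_succ)]
    calc A (k + 2) * D * (A (k + 1))ᵀ * (A (k + 1) * D ^ (k + 1) * (A 0)ᵀ)
        = A (k + 2) * D * ((A (k + 1))ᵀ * A (k + 1)) * D ^ (k + 1) * (A 0)ᵀ := by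
          simp only [Matrix.mul_assoc]
      _ = A (k + 2) * D ^ (k + 2) * (A 0)ᵀ := by
          rw [hA (k + 1) (by omega) le_rfl, Matrix.mul_one, Matrix.mul_assoc (A (k + 2)),
            ← pow_succ']

theorem exists_orthonormal_cols_with_endpoints (hL : 1 ≤ L)
    (hdim : ∀ j, 1 ≤ j → j ≤ L - 1 → r ≤ d j)
    {U : Matrix (Fin (d L)) (Fin r) ℝ} {V : Matrix (Fin (d 0)) (Fin r) ℝ}
    (hU : Uᵀ * U = 1) (hV : Vᵀ * V = 1) :
    ∃ A : ∀ j, Matrix (Fin (d j)) (Fin r) ℝ,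
      A 0 = V ∧ A L = U ∧ ∀ j ≤ L, (A j)ᵀ * A j = 1 := by
  have hexists (j : ℕ) (hj : r ≤ d j) : ∃ B : Matrix (Fin (d j)) (Fin r) ℝ, Bᵀ * B = 1 :=
    exists_transpose_mul_self_eq_one (by simpa using hj)
  choose! B hB using hexists
  have hne : 0 ≠ L := by omega
  refine ⟨Function.update (Function.update B 0 V) L U, by simp [Function.update_of_ne hne],
    by simp, fun j hj => ?_⟩
  rcases eq_or_ne j L with rfl | hjL
  · simpa using hU
  rcases eq_or_ne j 0 with rfl | hj0
  · simpa [Function.update_of_ne hne] using hV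
  · simpa [Function.update_of_ne hjL, Function.update_of_ne hj0] using
      hB j (hdim j (by omega) (by omega))

theorem exists_chainProd_eq_and_frobNorm_sq_eq (hL : 1 ≤ L)
    (hdim : ∀ j, 1 ≤ j → j ≤ L - 1 → min (d L) (d 0) ≤ d j)
    (X : Matrix (Fin (d L)) (Fin (d 0)) ℝ) :
    ∃ W : ∀ i : ℕ, Matrix (Fin (d (i + 1))) (Fin (d i)) ℝ,
      chainProd d W L = X ∧ ∀ i < L, frobNorm (W i) ^ 2 = schattenPow X (2 / L) := by
  obtain ⟨U, V, hU, hV, hX⟩ := exists_singularValueDecomposition X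
  obtain ⟨A, hA0, hAL, hA⟩ := exists_orthonormal_cols_with_endpoints hL hdim hU hV
  let s (i : Fin (min (d L) (d 0))) : ℝ := singularValue X i ^ (1 / L : ℝ)
  have hs_pow : s ^ L = singularValue X := by
    funext i
    simp only [s, Pi.pow_apply, one_div]
    exact Real.rpow_inv_natCast_pow (singularValue_nonneg X i) (by omega)
  have hs_sq (i) : s i ^ 2 = singularValue X i ^ (2 / L : ℝ) := by
    rw [← Real.rpow_natCast, ← Real.rpow_mul (singularValue_nonneg X i), Nat.cast_ofNat,
      one_div_mul_eq_div]
  refine ⟨fun j => A (j + 1) * diagonal s * (A j)ᵀ, ?_, fun j hj => ?_⟩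
  · obtain ⟨k, rfl⟩ := Nat.exists_eq_add_of_le' hL
    rw [chainProd_mul_mul_transpose (fun j _ hj => hA j (by omega)), diagonal_pow, hs_pow, hA0,
      hAL, ← hX]
  · rw [frobNorm_sq_mul_diagonal_mul_transpose (hA _ hj) (hA _ hj.le)]
    simp only [hs_sq, schattenPow]

end Attainment

/-- Variational form of the Schatten-`2/L` quasi-norm: for `L ≥ 1` and any
matrix `X`, with intermediate dimensions `d_1, …, d_{L−1}` each at least
`min{m, n}` (where `d_L = m` is the number of rows and `d_0 = n` the number of
columns of `X`), the quantity `‖X‖_{S^{2/L}}^{2/L}` is the attained minimum of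
`(1/L)·∑ᵢ ‖Wᵢ‖_F²` over all factorizations `W_L ⋯ W_1 = X`. -/
theorem stmt16 (L : ℕ) (hL : 1 ≤ L) (d : ℕ → ℕ)
    (hdim : ∀ i : ℕ, 1 ≤ i → i ≤ L - 1 → min (d L) (d 0) ≤ d i)
    (X : Matrix (Fin (d L)) (Fin (d 0)) ℝ) :
    IsLeast {c : ℝ | ∃ W : ∀ i : ℕ, Matrix (Fin (d (i + 1))) (Fin (d i)) ℝ,
        chainProd d W L = X ∧ c = (1 / L : ℝ) * ∑ i : Fin L, frobNorm (W i.1) ^ 2}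
      (schattenPow X (2 / L)) := by
  constructor
  · obtain ⟨W, hWX, hW⟩ := exists_chainProd_eq_and_frobNorm_sq_eq hL hdim X
    have hL0 : (L : ℝ) ≠ 0 := by exact_mod_cast Nat.one_le_iff_ne_zero.mp hL
    refine ⟨W, hWX, ?_⟩
    simp [hW, hL0]
  · rintro c ⟨W, rfl, rfl⟩
    exact schattenPow_chainProd_le hL W
end

section
/- Let X ∈ ℝ^{n×n} be a doubly stochastic matrix with X ≠ I (the identity matrix). Then there exists a permutation σ of {1, …, n} that is not the identity permutation such that the product x_{1σ(1)}·x_{2σ(2)}···x_{nσ(n)} > 0, i.e., x_{iσ(i)} > 0 for all i. -/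
/-!
In a Birkhoff decomposition of a doubly stochastic matrix, a positive entry `M i j` is the total
weight of the permutations mapping `i` to `j`, so one of them has positive weight, and such a
permutation runs through positive entries only. A doubly stochastic matrix other than the identity
has a positive off-diagonal entry, and a permutation through that entry is not the identity.
-/

section DoublyStochastic

variable {R n : Type*} [Fintype n] [DecidableEq n]

theorem sum_smul_permMatrix_apply [NonAssocSemiring R] (w : Equiv.Perm n → R) (i j : n) :
    (∑ σ, w σ • σ.permMatrix R) i j = ∑ σ with σ i = j, w σ := by
  simp only [Matrix.sum_apply, Matrix.smul_apply, Equiv.toPEquiv_apply, PEquiv.toMatrix_apply,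
    Option.mem_def, Option.some.injEq, smul_eq_mul, mul_ite, mul_one, mul_zero, Finset.sum_filter]

theorem exists_ne_pos_of_mem_rowStochastic [Semiring R] [PartialOrder R] [IsOrderedRing R]
    {M : Matrix n n R} (hM : M ∈ Matrix.rowStochastic R n) (hne : M ≠ 1) :
    ∃ i j, i ≠ j ∧ 0 < M i j := by
  by_contra! hpos
  have offDiag_eq_zero {i j : n} (hij : i ≠ j) : M i j = 0 :=
    (Matrix.nonneg_of_mem_rowStochastic hM).eq_of_not_lt' (hpos i j hij)
  refine hne (Matrix.ext fun i j ↦ ?_)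
  obtain rfl | hij := eq_or_ne i j
  · calc
      M i i = ∑ k, M i k := (Fintype.sum_eq_single i fun _ hk ↦ offDiag_eq_zero hk.symm).symm
      _ = (1 : Matrix n n R) i i := by
        rw [Matrix.sum_row_of_mem_rowStochastic hM, Matrix.one_apply_eq]
  · rw [offDiag_eq_zero hij, Matrix.one_apply_ne hij]

section LinearOrderedField

variable [Field R] [LinearOrder R] [IsStrictOrderedRing R] {M : Matrix n n R}

theorem exists_perm_apply_eq_and_forall_pos_of_mem_doublyStochastic
    (hM : M ∈ doublyStochastic R n) {i j : n} (hij : 0 < M i j) :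
    ∃ σ : Equiv.Perm n, σ i = j ∧ ∀ k, 0 < M k (σ k) := by
  obtain ⟨w, w_nonneg, -, rfl⟩ := exists_eq_sum_perm_of_mem_doublyStochastic hM
  have entry_pos_iff (k l : n) :
      0 < (∑ σ, w σ • σ.permMatrix R) k l ↔ ∃ σ, σ k = l ∧ 0 < w σ := by
    simp [sum_smul_permMatrix_apply, Finset.sum_pos_iff_of_nonneg, w_nonneg]
  obtain ⟨σ, hσ, hwσ⟩ := (entry_pos_iff i j).mp hij
  exact ⟨σ, hσ, fun k ↦ (entry_pos_iff k (σ k)).mpr ⟨σ, rfl, hwσ⟩⟩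

theorem stmt17_general (hM : M ∈ doublyStochastic R n) (hne : M ≠ 1) :
    ∃ σ : Equiv.Perm n, σ ≠ Equiv.refl n ∧ ∀ i, 0 < M i (σ i) := by
  have hrow := (mem_doublyStochastic_iff_mem_rowStochastic_and_mem_colStochastic.mp hM).1
  obtain ⟨i, j, hij, hpos⟩ := exists_ne_pos_of_mem_rowStochastic hrow hne
  obtain ⟨σ, rfl, hσ⟩ := exists_perm_apply_eq_and_forall_pos_of_mem_doublyStochastic hM hpos
  refine ⟨σ, ?_, hσ⟩
  rintro rfl
  exact hij rfl

end LinearOrderedField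

end DoublyStochastic

/-- If `X` is an `n×n` doubly stochastic matrix that is not the identity
matrix, then there exists a non-identity permutation `σ` of `{1, …, n}` such
that `x_{1σ(1)}·x_{2σ(2)}···x_{nσ(n)} > 0`, i.e. `x_{iσ(i)} > 0` for all `i`. -/
theorem stmt17 (n : ℕ) (X : Matrix (Fin n) (Fin n) ℝ)
    (hnn : ∀ i j, 0 ≤ X i j)
    (hrow : ∀ i, ∑ j, X i j = 1)
    (hcol : ∀ j, ∑ i, X i j = 1)
    (hne : X ≠ 1) :
    ∃ σ : Equiv.Perm (Fin n), σ ≠ Equiv.refl (Fin n) ∧ ∀ i, 0 < X i (σ i) := by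
  exact stmt17_general (mem_doublyStochastic_iff_sum.mpr ⟨hnn, hrow, hcol⟩) hne
end

section
/- Let X ∈ ℝ^{n×n} be a doubly substochastic matrix, i.e., X has non-negative entries and every row sum and every column sum is at most 1. Then there exists a doubly stochastic matrix Y ∈ ℝ^{n×n} such that X ≤ Y entrywise, i.e., x_{ij} ≤ y_{ij} for all i, j. -/
/-!
The row deficits `1 - ∑ j, X i j` and the column deficits `1 - ∑ i, X i j` are non-negative and
have the same total. The normalised outer product of the two deficit vectors is therefore a
non-negative matrix with exactly these row and column sums, and adding it to `X` fills every row
and every column up to `1`.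
-/

section Marginals

variable {m n 𝕜 : Type*} [Fintype m] [Fintype n] [Field 𝕜] [LinearOrder 𝕜] [IsStrictOrderedRing 𝕜]

theorem mul_sum_div_sum_of_nonneg {a : m → 𝕜} (ha : ∀ i, 0 ≤ a i) (i : m) :
    a i * (∑ k, a k) / ∑ k, a k = a i :=
  -- If the total is zero then so is `a i`, and the identity reads `0 / 0 = 0`.
  mul_div_cancel_of_imp fun hsum =>
    (Finset.sum_eq_zero_iff_of_nonneg fun k _ => ha k).1 hsum i (Finset.mem_univ i)

theorem exists_nonneg_matrix_of_marginals {a : m → 𝕜} {b : n → 𝕜}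
    (ha : ∀ i, 0 ≤ a i) (hb : ∀ j, 0 ≤ b j) (hab : ∑ i, a i = ∑ j, b j) :
    ∃ P : Matrix m n 𝕜,
      (∀ i j, 0 ≤ P i j) ∧ (∀ i, ∑ j, P i j = a i) ∧ ∀ j, ∑ i, P i j = b j := by
  refine ⟨fun i j => a i * b j / ∑ k, a k, fun i j => ?_, fun i => ?_, fun j => ?_⟩
  · exact div_nonneg (mul_nonneg (ha i) (hb j)) (Finset.sum_nonneg fun k _ => ha k)
  · calc ∑ j, a i * b j / ∑ k, a k = a i * (∑ k, a k) / ∑ k, a k := by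
          rw [← Finset.sum_div, ← Finset.mul_sum, hab]
      _ = a i := mul_sum_div_sum_of_nonneg ha i
  · calc ∑ i, a i * b j / ∑ k, a k = b j * (∑ k, b k) / ∑ k, b k := by
          rw [← Finset.sum_div, ← Finset.sum_mul, hab, mul_comm]
      _ = b j := mul_sum_div_sum_of_nonneg hb j

theorem stmt18_general {r : m → 𝕜} {c : n → 𝕜} (X : Matrix m n 𝕜)
    (hrow : ∀ i, ∑ j, X i j ≤ r i) (hcol : ∀ j, ∑ i, X i j ≤ c j)
    (hrc : ∑ i, r i = ∑ j, c j) :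
    ∃ Y : Matrix m n 𝕜,
      (∀ i, ∑ j, Y i j = r i) ∧ (∀ j, ∑ i, Y i j = c j) ∧ ∀ i j, X i j ≤ Y i j := by
  have deficit_total : ∑ i, (r i - ∑ j, X i j) = ∑ j, (c j - ∑ i, X i j) := by
    rw [Finset.sum_sub_distrib, Finset.sum_sub_distrib, hrc, Finset.sum_comm]
  obtain ⟨P, P_nonneg, P_row, P_col⟩ := exists_nonneg_matrix_of_marginals
    (fun i => sub_nonneg.2 (hrow i)) (fun j => sub_nonneg.2 (hcol j)) deficit_total
  refine ⟨X + P, fun i => ?_, fun j => ?_, fun i j => le_add_of_nonneg_right (P_nonneg i j)⟩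
  · simp only [Matrix.add_apply, Finset.sum_add_distrib, P_row, add_sub_cancel]
  · simp only [Matrix.add_apply, Finset.sum_add_distrib, P_col, add_sub_cancel]

end Marginals

/-- Every doubly substochastic matrix is dominated entrywise by a doubly
stochastic matrix. -/
theorem stmt18 (n : ℕ) (X : Matrix (Fin n) (Fin n) ℝ)
    (hnn : ∀ i j, 0 ≤ X i j)
    (hrow : ∀ i, ∑ j, X i j ≤ 1)
    (hcol : ∀ j, ∑ i, X i j ≤ 1) :
    ∃ Y : Matrix (Fin n) (Fin n) ℝ,
      (∀ i j, 0 ≤ Y i j) ∧ (∀ i, ∑ j, Y i j = 1) ∧ (∀ j, ∑ i, Y i j = 1) ∧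
      ∀ i j, X i j ≤ Y i j := by
  obtain ⟨Y, Y_row, Y_col, X_le_Y⟩ := stmt18_general X hrow hcol rfl
  exact ⟨Y, fun i j => (hnn i j).trans (X_le_Y i j), Y_row, Y_col, X_le_Y⟩
end

section
/- Let g be a real-valued function defined on the set of n×n doubly stochastic matrices that is convex on this set (i.e., g(tX + (1−t)Y) ≤ t·g(X) + (1−t)·g(Y) for all doubly stochastic X, Y and t ∈ [0,1]). Then for every doubly stochastic matrix X ∈ ℝ^{n×n} there exists a permutation matrix P ∈ ℝ^{n×n} with g(X) ≤ g(P); consequently, the maximum of g over the set of doubly stochastic matrices is attained at a permutation matrix. -/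
/-- A doubly stochastic matrix is doubly stochastic: non-negative entries, all
row sums and all column sums equal to `1`. -/
def IsDoublyStochastic {n : ℕ} (X : Matrix (Fin n) (Fin n) ℝ) : Prop :=
  (∀ i j, 0 ≤ X i j) ∧ (∀ i, ∑ j, X i j = 1) ∧ (∀ j, ∑ i, X i j = 1)

/-!
By Birkhoff's theorem the doubly stochastic matrices are the convex hull of the finitely many
permutation matrices. Let `P` be a permutation matrix at which `g` is largest among these. The
sublevel set `{A | g A ≤ g P}` is convex, `g` being quasiconvex, and contains every permutation
matrix, so it contains every doubly stochastic matrix.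
-/

section Convexity

variable {𝕜 E β : Type*} [AddCommMonoid E] {s : Set E} {f : E → β}

theorem convexOn_of_forall_le_smul_add_one_sub_smul [Ring 𝕜] [PartialOrder 𝕜]
    [IsOrderedAddMonoid 𝕜] [SMul 𝕜 E] [AddCommMonoid β] [PartialOrder β] [SMul 𝕜 β]
    (hs : Convex 𝕜 s)
    (hf : ∀ x ∈ s, ∀ y ∈ s, ∀ t : 𝕜, 0 ≤ t → t ≤ 1 →
      f (t • x + (1 - t) • y) ≤ t • f x + (1 - t) • f y) :
    ConvexOn 𝕜 s f := by
  refine ⟨hs, fun x hx y hy a b ha hb hab ↦ ?_⟩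
  obtain rfl : b = 1 - a := eq_sub_of_add_eq' hab
  exact hf x hx y hy a ha (sub_nonneg.mp hb)

theorem exists_isMaxOn_convexHull_of_quasiconvexOn [Semiring 𝕜] [PartialOrder 𝕜] [Module 𝕜 E]
    [LinearOrder β] {t : Set E} (hf : QuasiconvexOn 𝕜 s f) (hts : t ⊆ s) (ht : t.Finite)
    (ht' : t.Nonempty) : ∃ x ∈ t, IsMaxOn f (convexHull 𝕜 t) x := by
  obtain ⟨x, hxt, hx⟩ := t.exists_max_image f ht ht'
  have hull_subset_sublevel : convexHull 𝕜 t ⊆ {y ∈ s | f y ≤ f x} :=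
    convexHull_min (fun y hy ↦ ⟨hts hy, hx y hy⟩) (hf (f x))
  exact ⟨x, hxt, fun y hy ↦ (hull_subset_sublevel hy).2⟩

end Convexity

theorem isDoublyStochastic_iff_mem_doublyStochastic {n : ℕ} {X : Matrix (Fin n) (Fin n) ℝ} :
    IsDoublyStochastic X ↔ X ∈ doublyStochastic ℝ (Fin n) :=
  mem_doublyStochastic_iff_sum.symm

theorem convexOn_doublyStochastic_of_forall_isDoublyStochastic {n : ℕ}
    {g : Matrix (Fin n) (Fin n) ℝ → ℝ}
    (hg : ∀ X Y : Matrix (Fin n) (Fin n) ℝ, IsDoublyStochastic X → IsDoublyStochastic Y →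
      ∀ t : ℝ, 0 ≤ t → t ≤ 1 →
        g (t • X + (1 - t) • Y) ≤ t * g X + (1 - t) * g Y) :
    ConvexOn ℝ (doublyStochastic ℝ (Fin n) : Set (Matrix (Fin n) (Fin n) ℝ)) g :=
  convexOn_of_forall_le_smul_add_one_sub_smul convex_doublyStochastic fun X hX Y hY ↦
    hg X Y (isDoublyStochastic_iff_mem_doublyStochastic.mpr hX)
      (isDoublyStochastic_iff_mem_doublyStochastic.mpr hY)

theorem stmt19_general {R ι β : Type*} [Field R] [LinearOrder R] [IsStrictOrderedRing R]
    [Fintype ι] [DecidableEq ι] [LinearOrder β] {g : Matrix ι ι R → β}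
    (hg : QuasiconvexOn R (doublyStochastic R ι : Set (Matrix ι ι R)) g) :
    ∃ σ : Equiv.Perm ι, IsMaxOn g (doublyStochastic R ι) (σ.permMatrix R) := by
  rw [doublyStochastic_eq_convexHull_permMatrix] at hg ⊢
  obtain ⟨_, ⟨σ, rfl⟩, hσ⟩ := exists_isMaxOn_convexHull_of_quasiconvexOn hg
    (subset_convexHull R _) (Set.finite_range _) (Set.range_nonempty _)
  exact ⟨σ, hσ⟩

/-- A real-valued function that is convex on the set of `n×n` doubly stochastic
matrices attains, at some permutation matrix, a value at least as large as its
value at any doubly stochastic matrix; consequently its maximum over the doubly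
stochastic matrices is attained at a permutation matrix. -/
theorem stmt19 (n : ℕ) (g : Matrix (Fin n) (Fin n) ℝ → ℝ)
    (hg : ∀ X Y : Matrix (Fin n) (Fin n) ℝ, IsDoublyStochastic X → IsDoublyStochastic Y →
      ∀ t : ℝ, 0 ≤ t → t ≤ 1 →
        g (t • X + (1 - t) • Y) ≤ t * g X + (1 - t) * g Y)
    (X : Matrix (Fin n) (Fin n) ℝ) (hX : IsDoublyStochastic X) :
    ∃ σ : Equiv.Perm (Fin n), g X ≤ g (σ.permMatrix ℝ) := by
  obtain ⟨σ, hσ⟩ :=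
    stmt19_general (convexOn_doublyStochastic_of_forall_isDoublyStochastic hg).quasiconvexOn
  exact ⟨σ, hσ (isDoublyStochastic_iff_mem_doublyStochastic.mp hX)⟩
end
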